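/- Assume conditions (C1)–(C3): there is α ∈ F⊗F with α·(σ(α)+S) = R; α and each Δ^{ij} are central in F⊗F; and P := α·(x₁−x₂) + β is not a zero divisor in (F⊗F)[x₁,x₂]. Let V_n^{⊗d} be the right B≀H(d)-module defined by the tensor-space action, and let S_{n,d} := End_{B≀H(d)}(V_n^{⊗d}) be its endomorphism 𝕜-algebra (the wreath Schur algebra). If n ≥ d, then the action map B≀H(d) → End_𝕜(V_n^{⊗d}) is injective and its image is exactly the set of 𝕜-linear endomorphisms of V_n^{⊗d} commuting with all elements of S_{n,d}; that is, B≀H(d) ≅ End_{S_{n,d}}(V_n^{⊗d}), so Schur duality holds between S_{n,d} and B≀H(d). -/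

import Mathlib

open scoped TensorProduct
open PiTensorProduct MvPolynomial

variable (k F : Type*) (m : ℕ)

/-- Weak Frobenius elements of `F ⊗ F`: `(a⊗b)·Δ = Δ·(b⊗a)` for all `a, b ∈ F`. -/
def IsWeakFrobenius [CommSemiring k] [Ring F] [Algebra k F] (Δ : F ⊗[k] F) : Prop :=
  ∀ a b : F, (a ⊗ₜ[k] b) * Δ = Δ * (b ⊗ₜ[k] a)

/-- Symmetric elements of `F ⊗ F`: fixed by the flip. -/
def IsSymmEl [CommSemiring k] [Ring F] [Algebra k F] (Δ : F ⊗[k] F) : Prop :=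
  (Algebra.TensorProduct.comm k F F) Δ = Δ

section Emb3
variable [CommSemiring k] [Ring F] [Algebra k F]

/-- The embedding `F⊗F → F^{⊗3}` placing the two legs in positions 1, 2. -/
noncomputable def emb12 : F ⊗[k] F →ₗ[k] F ⊗[k] (F ⊗[k] F) :=
  LinearMap.lTensor F ((TensorProduct.mk k F F).flip 1)

/-- The embedding `F⊗F → F^{⊗3}` placing the two legs in positions 2, 3. -/
noncomputable def emb23 : F ⊗[k] F →ₗ[k] F ⊗[k] (F ⊗[k] F) :=
  TensorProduct.mk k F (F ⊗[k] F) 1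

end Emb3

section BD
variable [Field k] [Ring F] [Algebra k F]

/-- The tensor power `F^{⊗d}` for `d = m + 2`. -/
abbrev TPow := ⨂[k] (_ : Fin (m + 2)), F

/-- `B^{⊗d} = F^{⊗d}[x₁,…,x_d]`, modelled as `F^{⊗d} ⊗ 𝕜[x₁,…,x_d]`. -/
abbrev BD := TPow k F m ⊗[k] MvPolynomial (Fin (m + 2)) k

/-- Insertion of `F` into the `j`-th tensor slot of `F^{⊗d}` (with `1` elsewhere). -/
noncomputable def ins (j : Fin (m + 2)) : F →ₗ[k] TPow k F m where
  toFun a := tprod k (Function.update (fun _ => (1 : F)) j a)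
  map_add' a b := by
    simpa using MultilinearMap.map_update_add (tprod k) (fun _ => (1 : F)) j a b
  map_smul' c a := by
    simpa using MultilinearMap.map_update_smul (tprod k) (fun _ => (1 : F)) j c a

/-- The placement of `Y ∈ F⊗F` with its legs in tensor slots `i` and `j` of `F^{⊗d}`. -/
noncomputable def place (i j : Fin (m + 2)) : F ⊗[k] F →ₗ[k] TPow k F m :=
  TensorProduct.lift
    ((LinearMap.mul k (TPow k F m)).compl₁₂ (ins k F m i) (ins k F m j))

/-- The place-permutation of the tensor slots `i, i+1` of `F^{⊗d}`. -/
noncomputable def sigmaT (i : Fin (m + 1)) : TPow k F m →ₗ[k] TPow k F m :=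
  (PiTensorProduct.reindex k (fun _ => F)
      (Equiv.swap i.castSucc i.succ)).toLinearMap

/-- The automorphism `σ_i` of `B^{⊗d}`: swaps the tensor slots `i, i+1` of `F^{⊗d}`
and the variables `x_i, x_{i+1}`. -/
noncomputable def sigmaB (i : Fin (m + 1)) : BD k F m →ₗ[k] BD k F m :=
  TensorProduct.map (sigmaT k F m i)
    (MvPolynomial.rename (⇑(Equiv.swap i.castSucc i.succ)) :
        MvPolynomial (Fin (m + 2)) k →ₐ[k] MvPolynomial (Fin (m + 2)) k).toLinearMap

/-- The variable `x_j` as an element of `B^{⊗d}`. -/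
noncomputable def xv (j : Fin (m + 2)) : BD k F m :=
  (1 : TPow k F m) ⊗ₜ[k] (X j : MvPolynomial (Fin (m + 2)) k)

variable (Δf : Fin 2 → Fin 2 → F ⊗[k] F) (Rv : F ⊗[k] F)

/-- `β_i ∈ B^{⊗d}`: `β` placed in slots `i, i+1` with variables `x_i, x_{i+1}`. -/
noncomputable def betaI (i : Fin (m + 1)) : BD k F m :=
  (place k F m i.castSucc i.succ (Δf 0 0)) ⊗ₜ[k] (1 : MvPolynomial (Fin (m + 2)) k)
    + (place k F m i.castSucc i.succ (Δf 1 0)) ⊗ₜ[k] (X i.castSucc)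
    + (place k F m i.castSucc i.succ (Δf 0 1)) ⊗ₜ[k] (X i.succ)
    + (place k F m i.castSucc i.succ (Δf 1 1)) ⊗ₜ[k] (X i.castSucc * X i.succ)

/-- `S_i ∈ B^{⊗d}`: `S = Δ¹⁰ − Δ⁰¹` placed in slots `i, i+1`. -/
noncomputable def SI (i : Fin (m + 1)) : BD k F m :=
  (place k F m i.castSucc i.succ (Δf 1 0 - Δf 0 1)) ⊗ₜ[k]
    (1 : MvPolynomial (Fin (m + 2)) k)

/-- `R_i ∈ B^{⊗d}`: `R` placed in slots `i, i+1`. -/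
noncomputable def RI (i : Fin (m + 1)) : BD k F m :=
  (place k F m i.castSucc i.succ Rv) ⊗ₜ[k] (1 : MvPolynomial (Fin (m + 2)) k)

end BD

/-- The defining relations of the quantum wreath product of polynomial type
`B ≀ H(d)`, `d = m+2`: the algebra structure of `B^{⊗d}`, the braid relations,
the quadratic relations and the wreath relations. -/
inductive QRel (k F : Type*) [Field k] [Ring F] [Algebra k F] (m : ℕ)
    (Δf : Fin 2 → Fin 2 → F ⊗[k] F) (Rv : F ⊗[k] F)
    (ρf : Fin (m + 1) → BD k F m →ₗ[k] BD k F m) :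
    FreeAlgebra k (BD k F m ⊕ Fin (m + 1)) →
      FreeAlgebra k (BD k F m ⊕ Fin (m + 1)) → Prop
  | add_gen (a b : BD k F m) :
      QRel k F m Δf Rv ρf
        (FreeAlgebra.ι k (Sum.inl a) + FreeAlgebra.ι k (Sum.inl b))
        (FreeAlgebra.ι k (Sum.inl (a + b)))
  | smul_gen (c : k) (a : BD k F m) :
      QRel k F m Δf Rv ρf (c • FreeAlgebra.ι k (Sum.inl a))
        (FreeAlgebra.ι k (Sum.inl (c • a)))
  | mul_gen (a b : BD k F m) :
      QRel k F m Δf Rv ρf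
        (FreeAlgebra.ι k (Sum.inl a) * FreeAlgebra.ι k (Sum.inl b))
        (FreeAlgebra.ι k (Sum.inl (a * b)))
  | one_gen :
      QRel k F m Δf Rv ρf (FreeAlgebra.ι k (Sum.inl (1 : BD k F m))) 1
  | braid_far (i j : Fin (m + 1)) (h : (i : ℕ) + 2 ≤ (j : ℕ) ∨ (j : ℕ) + 2 ≤ (i : ℕ)) :
      QRel k F m Δf Rv ρf
        (FreeAlgebra.ι k (Sum.inr i) * FreeAlgebra.ι k (Sum.inr j))
        (FreeAlgebra.ι k (Sum.inr j) * FreeAlgebra.ι k (Sum.inr i))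
  | braid (i j : Fin (m + 1)) (h : (i : ℕ) + 1 = (j : ℕ)) :
      QRel k F m Δf Rv ρf
        (FreeAlgebra.ι k (Sum.inr i) * FreeAlgebra.ι k (Sum.inr j) *
          FreeAlgebra.ι k (Sum.inr i))
        (FreeAlgebra.ι k (Sum.inr j) * FreeAlgebra.ι k (Sum.inr i) *
          FreeAlgebra.ι k (Sum.inr j))
  | quad (i : Fin (m + 1)) :
      QRel k F m Δf Rv ρf
        (FreeAlgebra.ι k (Sum.inr i) * FreeAlgebra.ι k (Sum.inr i))
        (FreeAlgebra.ι k (Sum.inl (SI k F m Δf i)) * FreeAlgebra.ι k (Sum.inr i)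
          + FreeAlgebra.ι k (Sum.inl (RI k F m Rv i)))
  | wreath (i : Fin (m + 1)) (b : BD k F m) :
      QRel k F m Δf Rv ρf
        (FreeAlgebra.ι k (Sum.inr i) * FreeAlgebra.ι k (Sum.inl b))
        (FreeAlgebra.ι k (Sum.inl (sigmaB k F m i b)) * FreeAlgebra.ι k (Sum.inr i)
          + FreeAlgebra.ι k (Sum.inl (ρf i b)))

section QWPdefs
variable [Field k] [Ring F] [Algebra k F]
variable (Δf : Fin 2 → Fin 2 → F ⊗[k] F) (Rv : F ⊗[k] F)
variable (ρf : Fin (m + 1) → BD k F m →ₗ[k] BD k F m)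

/-- The quantum wreath product of polynomial type, presented by generators and
relations. -/
abbrev QWP := RingQuot (QRel k F m Δf Rv ρf)

/-- The canonical map `B^{⊗d} → B ≀ H(d)`. -/
noncomputable def embB (b : BD k F m) : QWP k F m Δf Rv ρf :=
  RingQuot.mkAlgHom k (QRel k F m Δf Rv ρf) (FreeAlgebra.ι k (Sum.inl b))

/-- The Hecke-like generator `H_i ∈ B ≀ H(d)`. -/
noncomputable def genH (i : Fin (m + 1)) : QWP k F m Δf Rv ρf :=
  RingQuot.mkAlgHom k (QRel k F m Δf Rv ρf) (FreeAlgebra.ι k (Sum.inr i))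

/-- The simple transposition `s_i = (i, i+1) ∈ S_d`, `d = m+2`. -/
def swPerm (i : Fin (m + 1)) : Equiv.Perm (Fin (m + 2)) :=
  Equiv.swap i.castSucc i.succ

/-- The number of inversions (Coxeter length) of a permutation. -/
noncomputable def invCount (w : Equiv.Perm (Fin (m + 2))) : ℕ :=
  (Finset.univ.filter fun p : Fin (m + 2) × Fin (m + 2) =>
    p.1 < p.2 ∧ w p.2 < w p.1).card

/-- `L` is a reduced expression for `w`. -/
def IsReducedWord (L : List (Fin (m + 1))) (w : Equiv.Perm (Fin (m + 2))) : Prop :=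
  (L.map (swPerm m)).prod = w ∧ L.length = invCount m w

end QWPdefs

section Tensorspace
variable [Field k] [Ring F] [Algebra k F] (n : ℕ)
variable (Δf : Fin 2 → Fin 2 → F ⊗[k] F) (αv Rv : F ⊗[k] F)
variable (ρf : Fin (m + 1) → BD k F m →ₗ[k] BD k F m)

/-- The tensor space `V_n^{⊗d} = ⊕_{i ∈ {1,…,n}^d} v_i·B^{⊗d}`, modelled as
finitely supported `B^{⊗d}`-valued functions on the index tuples. -/
abbrev TSp := (Fin (m + 2) → Fin n) →₀ BD k F m

/-- Right multiplication by `b ∈ B^{⊗d}` on the tensor space (factorwise action). -/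
noncomputable def mulBy (b : BD k F m) : TSp k F m n → TSp k F m n :=
  fun v => v.mapRange (· * b) (zero_mul b)

/-- `ᾱ_k ∈ B^{⊗d}`: `ᾱ = σ(α) + S` placed in slots `k, k+1`. -/
noncomputable def abarI (i : Fin (m + 1)) : BD k F m :=
  (place k F m i.castSucc i.succ
      ((Algebra.TensorProduct.comm k F F) αv + (Δf 1 0 - Δf 0 1))) ⊗ₜ[k]
    (1 : MvPolynomial (Fin (m + 2)) k)

/-- The right action of the Hecke-like generator `H_k` on the tensor space. -/
noncomputable def Hop (i : Fin (m + 1)) : TSp k F m n → TSp k F m n :=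
  fun v => v.sum fun idx b =>
    if idx i.castSucc < idx i.succ then
      Finsupp.single (fun j => idx ((Equiv.swap i.castSucc i.succ) j))
          (sigmaB k F m i b)
        + Finsupp.single idx (ρf i b)
    else if idx i.castSucc = idx i.succ then
      Finsupp.single idx (abarI k F m Δf αv i * sigmaB k F m i b)
        + Finsupp.single idx (ρf i b)
    else
      Finsupp.single (fun j => idx ((Equiv.swap i.castSucc i.succ) j))
          (RI k F m Rv i * sigmaB k F m i b)
        + Finsupp.single idx (ρf i b + SI k F m Δf i * sigmaB k F m i b)

end Tensorspace


section C3
variable [Field k] [Ring F] [Algebra k F]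

/-- The polynomial ring `(F⊗F)[x₁,x₂]`, modelled as `(F⊗F) ⊗ 𝕜[x₁,x₂]`. -/
abbrev PolyFF := (F ⊗[k] F) ⊗[k] MvPolynomial (Fin 2) k

/-- The element `P = α·(x₁−x₂) + β` of `(F⊗F)[x₁,x₂]`. -/
noncomputable def Pel (Δf : Fin 2 → Fin 2 → F ⊗[k] F) (αv : F ⊗[k] F) : PolyFF k F :=
  αv ⊗ₜ[k] ((X (0 : Fin 2) : MvPolynomial (Fin 2) k) - X 1)
    + Δf 0 0 ⊗ₜ[k] (1 : MvPolynomial (Fin 2) k)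
    + Δf 1 0 ⊗ₜ[k] (X (0 : Fin 2) : MvPolynomial (Fin 2) k)
    + Δf 0 1 ⊗ₜ[k] (X (1 : Fin 2) : MvPolynomial (Fin 2) k)
    + Δf 1 1 ⊗ₜ[k] ((X (0 : Fin 2) : MvPolynomial (Fin 2) k) * X 1)

end C3

/-!
Since `n ≥ d`, there is a strictly increasing tuple `ι ∈ {1,…,n}^d`. The summands of `V_n^{⊗d}`
indexed by the orbit of `ι` form a copy of the regular right module: the map sending `v_{ι∘w}·b` to
`H_w·b`, and the other summands to zero, is equivariant and sends `v_ι` to `1`. Any representation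
with an equivariant map onto the regular module taking some vector to `1` is faithful and has the
double centralizer property.

That `H_w` does not depend on the reduced expression follows by confluence of descents (Matsumoto's
theorem for the symmetric group). Equivariance also needs `ρ_i(σ_i(b)) = -ρ_i(b)`, `σ_i(S_i) = S_i`
and `ρ_i(S_i) = 0`; these are read off by letting the wreath and quadratic relations act on `v_ι`.
-/

section DoubleCentralizer

variable {R A M : Type*} [CommSemiring R] [Semiring A] [Algebra R A] [AddCommMonoid M] [Module R M]
  {r : A →ₐ[R] Module.End R M} {G : M →ₗ[R] A} {v₀ : M}

theorem injective_of_equivariant_retraction (hG : ∀ a v, G (r a v) = a * G v) (hv₀ : G v₀ = 1) :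
    Function.Injective r :=
  Function.LeftInverse.injective (g := fun φ ↦ G (φ v₀)) fun a ↦ by simp only [hG, hv₀, mul_one]

theorem centralizer_centralizer_range_of_equivariant_retraction
    (hG : ∀ a v, G (r a v) = a * G v) (hv₀ : G v₀ = 1) :
    Subalgebra.centralizer R (Subalgebra.centralizer R (r.range : Set (Module.End R M)) :
      Set (Module.End R M)) = r.range := by
  refine le_antisymm (fun ψ hψ ↦ ⟨G (ψ v₀), LinearMap.ext fun v ↦ ?_⟩)
    Set.subset_centralizer_centralizer
  let φ : Module.End R M := r.toLinearMap.flip v ∘ₗ G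
  have hφ : φ ∈ Subalgebra.centralizer R (r.range : Set (Module.End R M)) := by
    rintro _ ⟨a, rfl⟩
    ext u
    simp [φ, hG]
  calc r (G (ψ v₀)) v = ψ (φ v₀) := LinearMap.congr_fun (hψ φ hφ) v₀
    _ = ψ v := by simp [φ, hv₀]

/-- A linear anti-multiplicative map, regarded as an algebra homomorphism from the opposite
algebra. It turns a right action given by operators into a representation. -/
def algHomOfAntihom {B : Type*} [Semiring B] [Algebra R B] (f : A → B) (map_one : f 1 = 1)
    (map_mul : ∀ x y, f (x * y) = f y * f x) (map_add : ∀ x y, f (x + y) = f x + f y)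
    (map_smul : ∀ (c : R) x, f (c • x) = c • f x) : Aᵐᵒᵖ →ₐ[R] B :=
  AlgHom.ofLinearMap
    { toFun := fun x ↦ f x.unop
      map_add' := fun _ _ ↦ map_add _ _
      map_smul' := fun _ _ ↦ map_smul _ _ }
    map_one fun _ _ ↦ map_mul _ _

end DoubleCentralizer

section BraidLift

variable {A : Type*} [Monoid A] {m}

/-- A family in a monoid satisfying the braid relations of type `A`, that is, the images of the
Artin generators under a homomorphism from the positive braid monoid. -/
structure IsBraidFamily (H : Fin (m + 1) → A) : Prop where
  commute (i j : Fin (m + 1)) (h : (i : ℕ) + 2 ≤ j) : Commute (H i) (H j)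
  braid (i j : Fin (m + 1)) (h : (i : ℕ) + 1 = j) : H i * H j * H i = H j * H i * H j

theorem swPerm_apply_castSucc (i : Fin (m + 1)) : swPerm m i i.castSucc = i.succ :=
  Equiv.swap_apply_left _ _

theorem swPerm_apply_succ (i : Fin (m + 1)) : swPerm m i i.succ = i.castSucc :=
  Equiv.swap_apply_right _ _

theorem swPerm_apply_of_ne_of_ne {i : Fin (m + 1)} {x : Fin (m + 2)} (hc : x ≠ i.castSucc)
    (hs : x ≠ i.succ) : swPerm m i x = x :=
  Equiv.swap_apply_of_ne_of_ne hc hs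

theorem swPerm_mul_self (i : Fin (m + 1)) : swPerm m i * swPerm m i = 1 :=
  Equiv.swap_mul_self _ _

theorem isBraidFamily_swPerm : IsBraidFamily (swPerm m) where
  commute i j h := by
    refine (Equiv.Perm.disjoint_iff_eq_or_eq.2 fun x ↦ ?_).commute
    by_cases hc : x = i.castSucc ∨ x = i.succ
    · right
      apply swPerm_apply_of_ne_of_ne <;> rcases hc with rfl | rfl <;>
        simp only [ne_eq, Fin.ext_iff, Fin.val_castSucc, Fin.val_succ] <;> lia
    · left
      exact swPerm_apply_of_ne_of_ne (fun h ↦ hc (.inl h)) (fun h ↦ hc (.inr h))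
  braid i j h := by
    have hb : i.succ = j.castSucc := Fin.ext h
    have hab : i.castSucc ≠ i.succ := Fin.castSucc_lt_succ.ne
    have hbc : i.succ ≠ j.succ := hb ▸ Fin.castSucc_lt_succ.ne
    have hac : i.castSucc ≠ j.succ := (Fin.castSucc_lt_succ.trans (hb ▸ Fin.castSucc_lt_succ)).ne
    simp only [swPerm, ← hb]
    rw [Equiv.swap_mul_swap_mul_swap hab hac, Equiv.swap_comm i.castSucc,
      Equiv.swap_comm _ j.succ, Equiv.swap_mul_swap_mul_swap hbc.symm hac.symm, Equiv.swap_comm]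

theorem toLex_mul_swPerm_lt {w : Equiv.Perm (Fin (m + 2))} {i : Fin (m + 1)}
    (hi : w i.succ < w i.castSucc) : toLex ⇑(w * swPerm m i) < toLex ⇑w :=
  Pi.lex_desc Fin.castSucc_lt_succ.le hi

/-- `f` may be computed at `u` by splitting off any right descent of `u`. -/
def SplitsDescents (H : Fin (m + 1) → A) (f : Equiv.Perm (Fin (m + 2)) → A)
    (u : Equiv.Perm (Fin (m + 2))) : Prop :=
  ∀ i, u i.succ < u i.castSucc → f u = f (u * swPerm m i) * H i

section Confluence

variable {H : Fin (m + 1) → A} {f : Equiv.Perm (Fin (m + 2)) → A}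
  {w : Equiv.Perm (Fin (m + 2))} {i j : Fin (m + 1)}

theorem mul_eq_mul_of_descents_far (hH : IsBraidFamily H)
    (ih : ∀ u : Equiv.Perm _, toLex ⇑u < toLex ⇑w → SplitsDescents H f u)
    (hij : (i : ℕ) + 2 ≤ j) (hi : w i.succ < w i.castSucc) (hj : w j.succ < w j.castSucc) :
    f (w * swPerm m i) * H i = f (w * swPerm m j) * H j := by
  have fix_j : swPerm m i j.castSucc = j.castSucc ∧ swPerm m i j.succ = j.succ := by
    constructor <;> apply swPerm_apply_of_ne_of_ne <;>
      simp only [ne_eq, Fin.ext_iff, Fin.val_castSucc, Fin.val_succ] <;> lia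
  have fix_i : swPerm m j i.castSucc = i.castSucc ∧ swPerm m j i.succ = i.succ := by
    constructor <;> apply swPerm_apply_of_ne_of_ne <;>
      simp only [ne_eq, Fin.ext_iff, Fin.val_castSucc, Fin.val_succ] <;> lia
  calc f (w * swPerm m i) * H i
      = f (w * swPerm m i * swPerm m j) * H j * H i := by
        rw [ih _ (toLex_mul_swPerm_lt hi) j (by simpa [fix_j] using hj)]
    _ = f (w * swPerm m j * swPerm m i) * H i * H j := by
        rw [mul_assoc w, (isBraidFamily_swPerm.commute i j hij).eq, mul_assoc, mul_assoc,
          (hH.commute i j hij).eq, mul_assoc]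
    _ = f (w * swPerm m j) * H j := by
        rw [ih _ (toLex_mul_swPerm_lt hj) i (by simpa [fix_i] using hi)]

theorem mul_eq_mul_of_descents_adjacent (hH : IsBraidFamily H)
    (ih : ∀ u : Equiv.Perm _, toLex ⇑u < toLex ⇑w → SplitsDescents H f u)
    (hij : (i : ℕ) + 1 = j) (hi : w i.succ < w i.castSucc) (hj : w j.succ < w j.castSucc) :
    f (w * swPerm m i) * H i = f (w * swPerm m j) * H j := by
  have hb : i.succ = j.castSucc := Fin.ext hij
  have hac : i.castSucc < j.succ := Fin.castSucc_lt_succ.trans (hb ▸ Fin.castSucc_lt_succ)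
  have fix_c : swPerm m i j.succ = j.succ :=
    swPerm_apply_of_ne_of_ne hac.ne' (hb ▸ Fin.castSucc_lt_succ.ne')
  have fix_a : swPerm m j i.castSucc = i.castSucc :=
    swPerm_apply_of_ne_of_ne (hb ▸ Fin.castSucc_lt_succ.ne) hac.ne
  have i_b : swPerm m i j.castSucc = i.castSucc := hb ▸ swPerm_apply_succ i
  have j_b : swPerm m j i.succ = j.succ := hb ▸ swPerm_apply_castSucc j
  have hca : w j.succ < w i.castSucc := (hb ▸ hj).trans hi
  have hij₁ : (w * swPerm m i) j.succ < (w * swPerm m i) j.castSucc := by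
    simpa [fix_c, i_b] using hca
  have hji₁ : (w * swPerm m j) i.succ < (w * swPerm m j) i.castSucc := by
    simpa [fix_a, j_b] using hca
  have hij₂ : (w * swPerm m i * swPerm m j) i.succ < (w * swPerm m i * swPerm m j) i.castSucc := by
    simpa [fix_a, fix_c, j_b, swPerm_apply_castSucc, hb] using hj
  have hji₂ : (w * swPerm m j * swPerm m i) j.succ < (w * swPerm m j * swPerm m i) j.castSucc := by
    simpa [fix_a, fix_c, i_b, swPerm_apply_succ, ← hb] using hi
  have hwi := toLex_mul_swPerm_lt hi
  have hwj := toLex_mul_swPerm_lt hj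
  calc f (w * swPerm m i) * H i
      = f (w * swPerm m i * swPerm m j * swPerm m i) * (H i * H j * H i) := by
        rw [ih _ hwi j hij₁, ih _ ((toLex_mul_swPerm_lt hij₁).trans hwi) i hij₂]
        simp only [mul_assoc]
    _ = f (w * swPerm m j * swPerm m i * swPerm m j) * (H j * H i * H j) := by
        rw [hH.braid i j hij]
        congr 2
        simpa only [mul_assoc] using congrArg (w * ·) (isBraidFamily_swPerm.braid i j hij)
    _ = f (w * swPerm m j) * H j := by
        rw [ih _ hwj i hji₁, ih _ ((toLex_mul_swPerm_lt hji₁).trans hwj) j hji₂]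
        simp only [mul_assoc]

theorem mul_eq_mul_of_descents (hH : IsBraidFamily H)
    (ih : ∀ u : Equiv.Perm _, toLex ⇑u < toLex ⇑w → SplitsDescents H f u)
    (hi : w i.succ < w i.castSucc) (hj : w j.succ < w j.castSucc) :
    f (w * swPerm m i) * H i = f (w * swPerm m j) * H j := by
  wlog hij : i ≤ j generalizing i j
  · exact (this hj hi (le_of_not_ge hij)).symm
  obtain rfl | hadj | hfar : i = j ∨ (i : ℕ) + 1 = j ∨ (i : ℕ) + 2 ≤ j := by lia
  · rfl
  · exact mul_eq_mul_of_descents_adjacent hH ih hadj hi hj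
  · exact mul_eq_mul_of_descents_far hH ih hfar hi hj

end Confluence

open Classical in
/-- The product `H_w = H_{i₁} ⋯ H_{iₗ}` along a reduced expression `w = s_{i₁} ⋯ s_{iₗ}`, found by
splitting off a chosen right descent as long as there is one. Each step lowers the one-line
notation of `w` lexicographically. -/
noncomputable def braidLift (H : Fin (m + 1) → A) (w : Equiv.Perm (Fin (m + 2))) : A :=
  if hw : ∃ i : Fin (m + 1), w i.succ < w i.castSucc then
    braidLift H (w * swPerm m hw.choose) * H hw.choose else 1
termination_by (wellFounded_lt (α := Lex (Fin (m + 2) → Fin (m + 2)))).wrap (toLex ⇑w)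
decreasing_by exact toLex_mul_swPerm_lt hw.choose_spec

theorem braidLift_one (H : Fin (m + 1) → A) : braidLift H 1 = 1 := by
  rw [braidLift, dif_neg]
  exact fun ⟨_, hi⟩ ↦ hi.not_gt Fin.castSucc_lt_succ

theorem IsBraidFamily.splitsDescents_braidLift {H : Fin (m + 1) → A} (hH : IsBraidFamily H)
    (w : Equiv.Perm (Fin (m + 2))) : SplitsDescents H (braidLift H) w := by
  intro i hi
  have hw : ∃ i : Fin (m + 1), w i.succ < w i.castSucc := ⟨i, hi⟩
  rw [braidLift, dif_pos hw]
  exact mul_eq_mul_of_descents hH (fun u _ ↦ hH.splitsDescents_braidLift u) hw.choose_spec hi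
termination_by (wellFounded_lt (α := Lex (Fin (m + 2) → Fin (m + 2)))).wrap (toLex ⇑w)
decreasing_by assumption

theorem IsBraidFamily.braidLift_mul_swPerm {H : Fin (m + 1) → A} (hH : IsBraidFamily H)
    {w : Equiv.Perm (Fin (m + 2))} {i : Fin (m + 1)} (hi : w i.castSucc < w i.succ) :
    braidLift H (w * swPerm m i) = braidLift H w * H i := by
  have hdesc : (w * swPerm m i) i.succ < (w * swPerm m i) i.castSucc := by
    simpa [swPerm_apply_castSucc, swPerm_apply_succ] using hi
  rw [hH.splitsDescents_braidLift _ i hdesc, mul_assoc w, swPerm_mul_self, mul_one]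

end BraidLift

theorem isLeftRegular_one_tmul {R T P : Type*} [CommRing R] [Ring T] [Algebra R T] [Module.Flat R T]
    [Ring P] [Algebra R P] {q : P} (hq : IsLeftRegular q) : IsLeftRegular ((1 : T) ⊗ₜ[R] q) := by
  have hmul : LinearMap.mulLeft R ((1 : T) ⊗ₜ[R] q) = (LinearMap.mulLeft R q).lTensor T :=
    TensorProduct.ext' fun t p ↦ by simp
  intro x y hxy
  refine Module.Flat.lTensor_preserves_injective_linearMap (M := T) (LinearMap.mulLeft R q) hq ?_
  rw [← hmul]
  exact hxy

section PolynomialTensorPower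

variable {k F m} [Field k] [Ring F] [Algebra k F]

theorem sigmaT_sigmaT (i : Fin (m + 1)) (t : TPow k F m) :
    sigmaT k F m i (sigmaT k F m i t) = t := by
  have hsymm : (reindex k (fun _ ↦ F) (Equiv.swap i.castSucc i.succ)).symm =
      reindex k (fun _ ↦ F) (Equiv.swap i.castSucc i.succ) := by
    rw [reindex_symm, Equiv.symm_swap]
  simp only [sigmaT, LinearEquiv.coe_coe]
  nth_rw 1 [← hsymm]
  exact LinearEquiv.symm_apply_apply _ _

theorem sigmaB_sigmaB (i : Fin (m + 1)) (b : BD k F m) : sigmaB k F m i (sigmaB k F m i b) = b := by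
  induction b using TensorProduct.induction_on with
  | zero => simp only [map_zero]
  | add x y hx hy => rw [map_add, map_add, hx, hy]
  | tmul t p => simp [sigmaB, sigmaT_sigmaT, rename_rename, ← Equiv.coe_trans]

theorem sigmaB_one (i : Fin (m + 1)) : sigmaB k F m i 1 = 1 := by
  simp [sigmaB, sigmaT, Algebra.TensorProduct.one_def, PiTensorProduct.one_def, Pi.one_def]

theorem isLeftRegular_xv_sub_xv {i j : Fin (m + 2)} (hij : i ≠ j) :
    IsLeftRegular (xv k F m i - xv k F m j) := by
  rw [xv, xv, ← TensorProduct.tmul_sub]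
  refine isLeftRegular_one_tmul (IsLeftCancelMulZero.mul_left_cancel_of_ne_zero ?_)
  exact sub_ne_zero.2 fun h ↦ hij (X_injective h)

theorem map_one_of_divided_twisted_commutator {i : Fin (m + 1)} {c : BD k F m}
    {ρ : BD k F m → BD k F m}
    (hρ : ∀ a, (xv k F m i.castSucc - xv k F m i.succ) * ρ a = c * a - sigmaB k F m i a * c) :
    ρ 1 = 0 := by
  have hreg := isLeftRegular_xv_sub_xv (k := k) (F := F) (Fin.castSucc_lt_succ (i := i)).ne
  refine hreg ?_
  simp only [hρ, sigmaB_one, mul_one, one_mul, sub_self, mul_zero]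

end PolynomialTensorPower

namespace QWP

variable {k F m} [Field k] [Ring F] [Algebra k F]
  {Δf : Fin 2 → Fin 2 → F ⊗[k] F} {Rv : F ⊗[k] F} {ρf : Fin (m + 1) → BD k F m →ₗ[k] BD k F m}

variable (Δf Rv ρf) in
/-- The canonical map `B^{⊗d} → B ≀ H(d)` of `embB`, as an algebra homomorphism. -/
noncomputable def embBHom : BD k F m →ₐ[k] QWP k F m Δf Rv ρf :=
  AlgHom.ofLinearMap
    { toFun := embB k F m Δf Rv ρf
      map_add' := fun a b ↦ by
        simpa only [embB, map_add] using (RingQuot.mkAlgHom_rel k (QRel.add_gen a b)).symm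
      map_smul' := fun c a ↦ by
        simpa only [embB, map_smul, RingHom.id_apply] using
          (RingQuot.mkAlgHom_rel k (QRel.smul_gen c a)).symm }
    ((RingQuot.mkAlgHom_rel k QRel.one_gen).trans (map_one _))
    fun a b ↦ (RingQuot.mkAlgHom_rel k (QRel.mul_gen a b)).symm.trans (map_mul _ _ _)

theorem isBraidFamily_genH : IsBraidFamily (genH k F m Δf Rv ρf) where
  commute i j h := by
    simpa only [genH, commute_iff_eq, map_mul] using
      RingQuot.mkAlgHom_rel k (QRel.braid_far i j (.inl h))
  braid i j h := by
    simpa only [genH, map_mul] using RingQuot.mkAlgHom_rel k (QRel.braid i j h)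

theorem genH_mul_self (i : Fin (m + 1)) :
    genH k F m Δf Rv ρf i * genH k F m Δf Rv ρf i =
      embBHom Δf Rv ρf (SI k F m Δf i) * genH k F m Δf Rv ρf i +
        embBHom Δf Rv ρf (RI k F m Rv i) := by
  simpa only [map_mul, map_add] using! RingQuot.mkAlgHom_rel k (QRel.quad i)

theorem genH_mul_embBHom (i : Fin (m + 1)) (b : BD k F m) :
    genH k F m Δf Rv ρf i * embBHom Δf Rv ρf b =
      embBHom Δf Rv ρf (sigmaB k F m i b) * genH k F m Δf Rv ρf i + embBHom Δf Rv ρf (ρf i b) := by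
  simpa only [map_mul, map_add] using! RingQuot.mkAlgHom_rel k (QRel.wreath i b)

theorem induction_on {p : QWP k F m Δf Rv ρf → Prop} (x : QWP k F m Δf Rv ρf)
    (embBHom : ∀ b, p (embBHom Δf Rv ρf b)) (genH : ∀ i, p (genH k F m Δf Rv ρf i))
    (add : ∀ x y, p x → p y → p (x + y)) (mul : ∀ x y, p x → p y → p (x * y)) : p x := by
  obtain ⟨y, rfl⟩ := RingQuot.mkAlgHom_surjective k (QRel k F m Δf Rv ρf) x
  induction y using FreeAlgebra.induction with
  | grade0 c => simpa only [AlgHom.commutes] using embBHom (algebraMap k _ c)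
  | grade1 g => exact g.casesOn embBHom genH
  | mul a b ha hb => simpa only [map_mul] using mul _ _ ha hb
  | add a b ha hb => simpa only [map_add] using add _ _ ha hb

theorem embBHom_mul_genH {i : Fin (m + 1)}
    (hσρ : ∀ b, ρf i (sigmaB k F m i b) = -ρf i b) (b : BD k F m) :
    embBHom Δf Rv ρf b * genH k F m Δf Rv ρf i =
      genH k F m Δf Rv ρf i * embBHom Δf Rv ρf (sigmaB k F m i b) + embBHom Δf Rv ρf (ρf i b) := by
  rw [genH_mul_embBHom, sigmaB_sigmaB, hσρ, map_neg, neg_add_cancel_right]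

end QWP

section TensorSpace

open MulOpposite

variable {k F m} [Field k] [Ring F] [Algebra k F] {n : ℕ}
  {Δf : Fin 2 → Fin 2 → F ⊗[k] F} {αv Rv : F ⊗[k] F}
  {ρf : Fin (m + 1) → BD k F m →ₗ[k] BD k F m}

theorem mulBy_single (c b : BD k F m) (idx : Fin (m + 2) → Fin n) :
    mulBy k F m n c (Finsupp.single idx b) = Finsupp.single idx (b * c) :=
  Finsupp.mapRange_single

theorem Hop_single (i : Fin (m + 1)) (idx : Fin (m + 2) → Fin n) (b : BD k F m) :
    Hop k F m n Δf αv Rv ρf i (Finsupp.single idx b) =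
      if idx i.castSucc < idx i.succ then
        Finsupp.single (idx ∘ swPerm m i) (sigmaB k F m i b) + Finsupp.single idx (ρf i b)
      else if idx i.castSucc = idx i.succ then
        Finsupp.single idx (abarI k F m Δf αv i * sigmaB k F m i b)
          + Finsupp.single idx (ρf i b)
      else
        Finsupp.single (idx ∘ swPerm m i) (RI k F m Rv i * sigmaB k F m i b)
          + Finsupp.single idx (ρf i b + SI k F m Δf i * sigmaB k F m i b) := by
  rw [Hop, Finsupp.sum_single_index (by simp)]
  rfl

theorem Hop_single_of_lt {i : Fin (m + 1)} {idx : Fin (m + 2) → Fin n}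
    (hi : idx i.castSucc < idx i.succ) (b : BD k F m) :
    Hop k F m n Δf αv Rv ρf i (Finsupp.single idx b) =
      Finsupp.single (idx ∘ swPerm m i) (sigmaB k F m i b) + Finsupp.single idx (ρf i b) := by
  rw [Hop_single, if_pos hi]

theorem Hop_single_of_gt {i : Fin (m + 1)} {idx : Fin (m + 2) → Fin n}
    (hi : idx i.succ < idx i.castSucc) (b : BD k F m) :
    Hop k F m n Δf αv Rv ρf i (Finsupp.single idx b) =
      Finsupp.single (idx ∘ swPerm m i) (RI k F m Rv i * sigmaB k F m i b)
        + Finsupp.single idx (ρf i b + SI k F m Δf i * sigmaB k F m i b) := by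
  rw [Hop_single, if_neg hi.not_gt, if_neg hi.ne']

theorem single_add_single_inj_of_ne {ι M : Type*} [AddCommMonoid M] {p q : ι} (hpq : p ≠ q)
    {a b c d : M} :
    Finsupp.single p a + Finsupp.single q b = Finsupp.single p c + Finsupp.single q d ↔
      a = c ∧ b = d := by
  classical
  refine ⟨fun h ↦ ⟨?_, ?_⟩, by rintro ⟨rfl, rfl⟩; rfl⟩
  · simpa [Finsupp.single_apply, hpq.symm] using DFunLike.congr_fun h p
  · simpa [Finsupp.single_apply, hpq] using DFunLike.congr_fun h q

theorem comp_swPerm_ne {i : Fin (m + 1)} {idx : Fin (m + 2) → Fin n}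
    (hi : idx i.castSucc < idx i.succ) : idx ∘ swPerm m i ≠ idx := fun h ↦
  hi.ne' <| by simpa [swPerm_apply_castSucc] using congrFun h i.castSucc

theorem comp_swPerm_comp_swPerm (idx : Fin (m + 2) → Fin n) (i : Fin (m + 1)) :
    (idx ∘ swPerm m i) ∘ swPerm m i = idx := by
  rw [Function.comp_assoc, ← Equiv.Perm.coe_mul, swPerm_mul_self, Equiv.Perm.coe_one,
    Function.comp_id]

/-- A representation of the opposite algebra, that is, a right action of `B ≀ H(d)` on the tensor
space, in which the generators act by the defining formulas. -/
structure IsTensorSpaceAction (αv : F ⊗[k] F)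
    (r : (QWP k F m Δf Rv ρf)ᵐᵒᵖ →ₐ[k] Module.End k (TSp k F m n)) : Prop where
  embBHom_apply (b : BD k F m) (v : TSp k F m n) :
    r (op (QWP.embBHom Δf Rv ρf b)) v = mulBy k F m n b v
  genH_apply (i : Fin (m + 1)) (v : TSp k F m n) :
    r (op (genH k F m Δf Rv ρf i)) v = Hop k F m n Δf αv Rv ρf i v

namespace IsTensorSpaceAction

variable {r : (QWP k F m Δf Rv ρf)ᵐᵒᵖ →ₐ[k] Module.End k (TSp k F m n)} {i : Fin (m + 1)}
  {idx : Fin (m + 2) → Fin n}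

theorem apply_mul (r : (QWP k F m Δf Rv ρf)ᵐᵒᵖ →ₐ[k] Module.End k (TSp k F m n))
    (x y : QWP k F m Δf Rv ρf) (v : TSp k F m n) : r (op (x * y)) v = r (op y) (r (op x) v) := by
  rw [op_mul, map_mul, Module.End.mul_apply]

theorem rho_sigmaB (hr : IsTensorSpaceAction αv r) (hρ : ρf i 1 = 0)
    (hi : idx i.castSucc < idx i.succ) (b : BD k F m) : ρf i (sigmaB k F m i b) = -ρf i b := by
  have h := congrArg (fun x ↦ r (op x) (Finsupp.single idx 1)) (QWP.genH_mul_embBHom i b)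
  simp only [op_add, map_add, LinearMap.add_apply, apply_mul, hr.embBHom_apply, hr.genH_apply,
    Hop_single_of_lt hi, mulBy_single, sigmaB_one, one_mul, hρ, Finsupp.single_zero, add_zero,
    sigmaB_sigmaB, add_assoc, ← Finsupp.single_add] at h
  exact eq_neg_of_add_eq_zero_left (Finsupp.single_eq_zero.1 (left_eq_add.1 h))

theorem sigmaB_SI_and_rho_SI (hr : IsTensorSpaceAction αv r) (hρ : ρf i 1 = 0)
    (hi : idx i.castSucc < idx i.succ) :
    sigmaB k F m i (SI k F m Δf i) = SI k F m Δf i ∧ ρf i (SI k F m Δf i) = 0 := by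
  have hi' : (idx ∘ swPerm m i) i.succ < (idx ∘ swPerm m i) i.castSucc := by
    simpa [swPerm_apply_castSucc, swPerm_apply_succ] using hi
  have h := congrArg (fun x ↦ r (op x) (Finsupp.single idx 1)) (QWP.genH_mul_self i)
  simp only [op_add, map_add, LinearMap.add_apply, apply_mul, hr.embBHom_apply, hr.genH_apply,
    Hop_single_of_lt hi, Hop_single_of_gt hi', comp_swPerm_comp_swPerm, mulBy_single, sigmaB_one,
    one_mul, mul_one, hρ, Finsupp.single_zero, add_zero, zero_add, add_assoc,
    ← Finsupp.single_add] at h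
  rw [add_comm] at h
  obtain ⟨hσ, hR⟩ := (single_add_single_inj_of_ne (comp_swPerm_ne hi)).1 h
  exact ⟨hσ.symm, right_eq_add.1 hR⟩

theorem genH_mul_self_eq_genH_mul_SI_add (hr : IsTensorSpaceAction αv r) (hρ : ρf i 1 = 0)
    (hi : idx i.castSucc < idx i.succ) :
    genH k F m Δf Rv ρf i * genH k F m Δf Rv ρf i =
      genH k F m Δf Rv ρf i * QWP.embBHom Δf Rv ρf (SI k F m Δf i) +
        QWP.embBHom Δf Rv ρf (RI k F m Rv i) := by
  obtain ⟨hσ, hρS⟩ := hr.sigmaB_SI_and_rho_SI hρ hi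
  rw [QWP.genH_mul_embBHom, hσ, hρS, map_zero, add_zero, QWP.genH_mul_self]

end IsTensorSpaceAction

section OrbitRetraction

variable (Δf Rv ρf) in
/-- The projection of `V_n^{⊗d}` onto a copy of the regular right module of `B ≀ H(d)`: the summands
`v_{ι∘w}·B^{⊗d}` of the orbit of a strictly increasing tuple `ι` are sent to `H_w·B^{⊗d}`, and the
other summands to zero. -/
noncomputable def orbitRetraction (ι : Fin (m + 2) ↪o Fin n) :
    TSp k F m n →ₗ[k] QWP k F m Δf Rv ρf :=
  ∑ w : Equiv.Perm (Fin (m + 2)),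
    LinearMap.mulLeft k (braidLift (genH k F m Δf Rv ρf) w) ∘ₗ
      (QWP.embBHom Δf Rv ρf).toLinearMap ∘ₗ Finsupp.lapply (ι ∘ w)

variable (ι : Fin (m + 2) ↪o Fin n)

theorem orbitRetraction_apply (u : TSp k F m n) :
    orbitRetraction Δf Rv ρf ι u = ∑ w : Equiv.Perm (Fin (m + 2)),
      braidLift (genH k F m Δf Rv ρf) w * QWP.embBHom Δf Rv ρf (u (ι ∘ w)) := by
  simp [orbitRetraction]

theorem orbitRetraction_single_comp (w : Equiv.Perm (Fin (m + 2))) (b : BD k F m) :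
    orbitRetraction Δf Rv ρf ι (Finsupp.single (ι ∘ w) b) =
      braidLift (genH k F m Δf Rv ρf) w * QWP.embBHom Δf Rv ρf b := by
  rw [orbitRetraction_apply, Finset.sum_eq_single_of_mem w (Finset.mem_univ w),
    Finsupp.single_eq_same]
  intro w' _ hw'
  have hne : ι ∘ w' ≠ ι ∘ w := fun h ↦ hw' (DFunLike.coe_injective (ι.injective.comp_left h))
  rw [Finsupp.single_eq_of_ne hne, map_zero, mul_zero]

theorem orbitRetraction_single_one :
    orbitRetraction Δf Rv ρf ι (Finsupp.single ι 1) = 1 := by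
  simpa [braidLift_one] using
    orbitRetraction_single_comp (Δf := Δf) (Rv := Rv) (ρf := ρf) ι 1 1

theorem orbitRetraction_single_of_notMem {idx : Fin (m + 2) → Fin n}
    (hidx : idx ∉ Set.range fun w : Equiv.Perm (Fin (m + 2)) ↦ ι ∘ w) (b : BD k F m) :
    orbitRetraction Δf Rv ρf ι (Finsupp.single idx b) = 0 := by
  rw [orbitRetraction_apply]
  refine Finset.sum_eq_zero fun w _ ↦ ?_
  rw [Finsupp.single_eq_of_ne fun h ↦ hidx ⟨w, h⟩, map_zero, mul_zero]

theorem orbitRetraction_mulBy (b : BD k F m) (u : TSp k F m n) :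
    orbitRetraction Δf Rv ρf ι (mulBy k F m n b u) =
      orbitRetraction Δf Rv ρf ι u * QWP.embBHom Δf Rv ρf b := by
  simp only [orbitRetraction_apply, mulBy, Finsupp.mapRange_apply, map_mul, Finset.sum_mul,
    mul_assoc]

theorem comp_swPerm_mem_range_iff {ι idx : Fin (m + 2) → Fin n} {i : Fin (m + 1)} :
    (idx ∘ swPerm m i ∈ Set.range fun w : Equiv.Perm (Fin (m + 2)) ↦ ι ∘ w) ↔
      idx ∈ Set.range fun w : Equiv.Perm (Fin (m + 2)) ↦ ι ∘ w := by
  constructor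
  · rintro ⟨w, hw⟩
    exact ⟨w * swPerm m i, (congrArg (· ∘ swPerm m i) hw).trans (comp_swPerm_comp_swPerm idx i)⟩
  · rintro ⟨w, rfl⟩
    exact ⟨w * swPerm m i, rfl⟩

theorem orbitRetraction_Hop_single_of_notMem {idx : Fin (m + 2) → Fin n}
    (hidx : idx ∉ Set.range fun w : Equiv.Perm (Fin (m + 2)) ↦ ι ∘ w) (i : Fin (m + 1))
    (b : BD k F m) :
    orbitRetraction Δf Rv ρf ι (Hop k F m n Δf αv Rv ρf i (Finsupp.single idx b)) = 0 := by
  have hidx' := (comp_swPerm_mem_range_iff (i := i)).not.2 hidx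
  rw [Hop_single]
  split_ifs <;> simp only [map_add, orbitRetraction_single_of_notMem ι hidx,
    orbitRetraction_single_of_notMem ι hidx', add_zero]

namespace IsTensorSpaceAction

variable {r : (QWP k F m Δf Rv ρf)ᵐᵒᵖ →ₐ[k] Module.End k (TSp k F m n)} {i : Fin (m + 1)}
  {w : Equiv.Perm (Fin (m + 2))}

theorem orbitRetraction_Hop_single_of_ascent (hr : IsTensorSpaceAction αv r) (hρ : ρf i 1 = 0)
    (hw : w i.castSucc < w i.succ) (b : BD k F m) :
    orbitRetraction Δf Rv ρf ι (Hop k F m n Δf αv Rv ρf i (Finsupp.single (ι ∘ w) b)) =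
      orbitRetraction Δf Rv ρf ι (Finsupp.single (ι ∘ w) b) * genH k F m Δf Rv ρf i := by
  have hιw : (ι ∘ w) i.castSucc < (ι ∘ w) i.succ := ι.strictMono hw
  rw [Hop_single_of_lt hιw, Function.comp_assoc, ← Equiv.Perm.coe_mul, map_add]
  simp only [orbitRetraction_single_comp]
  rw [QWP.isBraidFamily_genH.braidLift_mul_swPerm hw, mul_assoc, mul_assoc, ← mul_add,
    QWP.embBHom_mul_genH (hr.rho_sigmaB hρ hιw)]

theorem orbitRetraction_Hop_single_of_descent (hr : IsTensorSpaceAction αv r) (hρ : ρf i 1 = 0)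
    (hw : w i.succ < w i.castSucc) (b : BD k F m) :
    orbitRetraction Δf Rv ρf ι (Hop k F m n Δf αv Rv ρf i (Finsupp.single (ι ∘ w) b)) =
      orbitRetraction Δf Rv ρf ι (Finsupp.single (ι ∘ w) b) * genH k F m Δf Rv ρf i := by
  have hι : ι i.castSucc < ι i.succ := ι.strictMono Fin.castSucc_lt_succ
  have hιw : (ι ∘ w) i.succ < (ι ∘ w) i.castSucc := ι.strictMono hw
  rw [Hop_single_of_gt hιw, Function.comp_assoc, ← Equiv.Perm.coe_mul, map_add]
  simp only [orbitRetraction_single_comp]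
  rw [QWP.isBraidFamily_genH.splitsDescents_braidLift w i hw,
    mul_assoc _ (QWP.embBHom Δf Rv ρf b), QWP.embBHom_mul_genH (hr.rho_sigmaB hρ hι)]
  set u := braidLift (genH k F m Δf Rv ρf) (w * swPerm m i)
  set H := genH k F m Δf Rv ρf i
  set e := QWP.embBHom Δf Rv ρf
  calc u * e (RI k F m Rv i * sigmaB k F m i b)
        + u * H * e (ρf i b + SI k F m Δf i * sigmaB k F m i b)
      = u * ((H * e (SI k F m Δf i) + e (RI k F m Rv i)) * e (sigmaB k F m i b)
          + H * e (ρf i b)) := by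
        simp only [map_add, map_mul, mul_add, add_mul, mul_assoc]
        abel
    _ = u * (H * H * e (sigmaB k F m i b) + H * e (ρf i b)) := by
        rw [hr.genH_mul_self_eq_genH_mul_SI_add hρ hι]
    _ = u * H * (H * e (sigmaB k F m i b) + e (ρf i b)) := by simp only [mul_add, mul_assoc]

theorem orbitRetraction_Hop_single (hr : IsTensorSpaceAction αv r) (hρ : ρf i 1 = 0)
    (idx : Fin (m + 2) → Fin n) (b : BD k F m) :
    orbitRetraction Δf Rv ρf ι (Hop k F m n Δf αv Rv ρf i (Finsupp.single idx b)) =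
      orbitRetraction Δf Rv ρf ι (Finsupp.single idx b) * genH k F m Δf Rv ρf i := by
  by_cases hidx : idx ∈ Set.range fun w : Equiv.Perm (Fin (m + 2)) ↦ ι ∘ w
  · obtain ⟨w, rfl⟩ := hidx
    obtain hw | hw := (w.injective.ne (Fin.castSucc_lt_succ (i := i)).ne).lt_or_gt
    · exact orbitRetraction_Hop_single_of_ascent ι hr hρ hw b
    · exact orbitRetraction_Hop_single_of_descent ι hr hρ hw b
  · rw [orbitRetraction_Hop_single_of_notMem ι hidx, orbitRetraction_single_of_notMem ι hidx,
      zero_mul]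

theorem orbitRetraction_apply_op (hr : IsTensorSpaceAction αv r) (hρ : ∀ i, ρf i 1 = 0)
    (x : QWP k F m Δf Rv ρf) (u : TSp k F m n) :
    orbitRetraction Δf Rv ρf ι (r (op x) u) = orbitRetraction Δf Rv ρf ι u * x := by
  induction x using QWP.induction_on generalizing u with
  | embBHom b => rw [hr.embBHom_apply, orbitRetraction_mulBy]
  | genH i =>
    induction u using Finsupp.induction_linear with
    | zero => simp only [map_zero, zero_mul]
    | add u v hu hv => simp only [map_add, add_mul, hu, hv]
    | single idx b => rw [hr.genH_apply, orbitRetraction_Hop_single ι hr (hρ i)]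
  | add x y hx hy => rw [op_add, map_add, LinearMap.add_apply, map_add, hx, hy, mul_add]
  | mul x y hx hy => rw [apply_mul, hy, hx, mul_assoc]

end IsTensorSpaceAction
end OrbitRetraction

end TensorSpace

open MulOpposite in
theorem stmt16_general [Field k] [Ring F] [Algebra k F] (n : ℕ) (hn : m + 2 ≤ n)
    (Δf : Fin 2 → Fin 2 → F ⊗[k] F) (Rv αv : F ⊗[k] F)
    (ρf : Fin (m + 1) → BD k F m →ₗ[k] BD k F m)
    (hρ : ∀ (i : Fin (m + 1)) (a : BD k F m),
      (xv k F m i.castSucc - xv k F m i.succ) * ρf i a =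
        betaI k F m Δf i * a - sigmaB k F m i a * betaI k F m Δf i)
    (act : QWP k F m Δf Rv ρf → (TSp k F m n →ₗ[k] TSp k F m n))
    (hact_one : act 1 = LinearMap.id)
    (hact_mul : ∀ x y, act (x * y) = (act y).comp (act x))
    (hact_add : ∀ x y, act (x + y) = act x + act y)
    (hact_smul : ∀ (c : k) x, act (c • x) = c • act x)
    (hact_emb : ∀ (b : BD k F m) (v : TSp k F m n),
      act (embB k F m Δf Rv ρf b) v = mulBy k F m n b v)
    (hact_H : ∀ (i : Fin (m + 1)) (v : TSp k F m n),
      act (genH k F m Δf Rv ρf i) v = Hop k F m n Δf αv Rv ρf i v) :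
    Function.Injective act ∧
    (∀ ψ : TSp k F m n →ₗ[k] TSp k F m n,
      (∀ φ : TSp k F m n →ₗ[k] TSp k F m n,
        (∀ x : QWP k F m Δf Rv ρf, φ.comp (act x) = (act x).comp φ) →
        ψ.comp φ = φ.comp ψ) ↔ ∃ x : QWP k F m Δf Rv ρf, ψ = act x) := by
  let r := algHomOfAntihom act hact_one hact_mul hact_add hact_smul
  have hr : IsTensorSpaceAction αv r := ⟨hact_emb, hact_H⟩
  have hρ₁ : ∀ i, ρf i 1 = 0 := fun i ↦ map_one_of_divided_twisted_commutator (hρ i)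
  let ι : Fin (m + 2) ↪o Fin n := Fin.castLEOrderEmb hn
  let G := (opLinearEquiv k).toLinearMap ∘ₗ orbitRetraction Δf Rv ρf ι
  have hG : ∀ a v, G (r a v) = a * G v := fun a v ↦
    congrArg op (hr.orbitRetraction_apply_op ι hρ₁ a.unop v)
  have hv₀ : G (Finsupp.single ι 1) = 1 := congrArg op (orbitRetraction_single_one ι)
  have hinj : Function.Injective r := injective_of_equivariant_retraction hG hv₀
  have hdc := centralizer_centralizer_range_of_equivariant_retraction hG hv₀
  refine ⟨fun x y hxy ↦ op_injective (hinj hxy), fun ψ ↦ ?_⟩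
  constructor
  · intro hψ
    have hmem : ψ ∈ r.range := by
      rw [← hdc]
      exact fun φ hφ ↦ (hψ φ fun x ↦ (hφ (act x) ⟨op x, rfl⟩).symm).symm
    obtain ⟨x, hx⟩ := hmem
    exact ⟨x.unop, hx.symm⟩
  · rintro ⟨x, rfl⟩ φ hφ
    exact (hφ x).symm

/-- **Schur duality for the wreath Schur algebra.**  If `n ≥ d` then the action map
`B ≀ H(d) → End_𝕜(V_n^{⊗d})` is injective and its image is exactly the centralizer of
the wreath Schur algebra `S_{n,d} = End_{B≀H(d)}(V_n^{⊗d})`. -/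
theorem stmt16 [Field k] [Ring F] [Algebra k F] [FiniteDimensional k F] (n : ℕ)
    (hn : m + 2 ≤ n)
    (Δf : Fin 2 → Fin 2 → F ⊗[k] F)
    (hwf : ∀ i j, IsWeakFrobenius k F (Δf i j))
    (hsym : ∀ i j, IsSymmEl k F (Δf i j))
    (hA2 : emb12 k F (Δf 0 0) * emb23 k F (Δf 1 1) =
      emb12 k F (Δf 0 1) * emb23 k F (Δf 1 0))
    (Rv : F ⊗[k] F) (hRc : ∀ z, Rv * z = z * Rv) (hRs : IsSymmEl k F Rv)
    -- (C1): `α·(σ(α)+S) = R`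
    (αv : F ⊗[k] F)
    (hC1 : αv * ((Algebra.TensorProduct.comm k F F) αv + (Δf 1 0 - Δf 0 1)) = Rv)
    -- (C2): `α` and each `Δ^{ij}` are central in `F⊗F`
    (hαc : ∀ z, αv * z = z * αv)
    (hΔc : ∀ i j z, Δf i j * z = z * Δf i j)
    -- (C3): `P = α·(x₁−x₂) + β` is not a zero divisor in `(F⊗F)[x₁,x₂]`
    (hC3 : ∀ z : PolyFF k F,
      (Pel k F Δf αv * z = 0 → z = 0) ∧ (z * Pel k F Δf αv = 0 → z = 0))
    (ρf : Fin (m + 1) → BD k F m →ₗ[k] BD k F m)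
    (hρ : ∀ (i : Fin (m + 1)) (a : BD k F m),
      (xv k F m i.castSucc - xv k F m i.succ) * ρf i a =
        betaI k F m Δf i * a - sigmaB k F m i a * betaI k F m Δf i)
    -- the right action of `B ≀ H(d)` on the tensor space `V_n^{⊗d}`
    (act : QWP k F m Δf Rv ρf → (TSp k F m n →ₗ[k] TSp k F m n))
    (hact_one : act 1 = LinearMap.id)
    (hact_mul : ∀ x y, act (x * y) = (act y).comp (act x))
    (hact_add : ∀ x y, act (x + y) = act x + act y)
    (hact_smul : ∀ (c : k) x, act (c • x) = c • act x)
    (hact_emb : ∀ (b : BD k F m) (v : TSp k F m n),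
      act (embB k F m Δf Rv ρf b) v = mulBy k F m n b v)
    (hact_H : ∀ (i : Fin (m + 1)) (v : TSp k F m n),
      act (genH k F m Δf Rv ρf i) v = Hop k F m n Δf αv Rv ρf i v) :
    -- the action map is injective,
    Function.Injective act ∧
    -- and its image is exactly the set of 𝕜-linear endomorphisms commuting with
    -- every element of the wreath Schur algebra `S_{n,d} = End_{B≀H(d)}(V_n^{⊗d})`
    (∀ ψ : TSp k F m n →ₗ[k] TSp k F m n,
      (∀ φ : TSp k F m n →ₗ[k] TSp k F m n,
        (∀ x : QWP k F m Δf Rv ρf, φ.comp (act x) = (act x).comp φ) →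
        ψ.comp φ = φ.comp ψ) ↔ ∃ x : QWP k F m Δf Rv ρf, ψ = act x) :=
  stmt16_general k F m n hn Δf Rv αv ρf hρ act hact_one hact_mul hact_add hact_smul hact_emb hact_H
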